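/- Commutator estimate for mollifiers: for κ > 0, h ∈ C¹(𝕋²) and g ∈ H^s(𝕋²) with 0 ≤ s ≤ 1, the commutator [Λ_κ, h] ∂̄ g := Λ_κ(h ∂̄ g) − h Λ_κ(∂̄ g), where ∂̄ is a horizontal derivative, satisfies |[Λ_κ, h] ∂̄ g|_{H^s} ≤ C ‖h‖_{C¹} |g|_{H^s}, with C independent of κ. -/

import Mathlib

open MeasureTheory

noncomputable section

/-- A fundamental domain for the torus `𝕋²`. -/
def TCube : Set (Fin 2 → ℝ) := {x | ∀ i, x i ∈ Set.Ioc (0:ℝ) 1}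

/-- Fourier coefficient of a (1-periodic) function on `𝕋²`. -/
def fCoeff (f : (Fin 2 → ℝ) → ℝ) (k : Fin 2 → ℤ) : ℂ :=
  ∫ x in TCube, (f x : ℂ) *
    Complex.exp (-(((2 * Real.pi * ∑ i, (k i : ℝ) * x i : ℝ) : ℂ)) * Complex.I)

/-- The squared `H^s(𝕋²)` norm, via Fourier coefficients. -/
def hsNormSq (s : ℝ) (f : (Fin 2 → ℝ) → ℝ) : ℝ :=
  ∑' k : Fin 2 → ℤ, ((1:ℝ) + ∑ i, ((k i : ℝ))^2) ^ s * ‖fCoeff f k‖^2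

/-- The horizontal mollifier `Λ_κ f = ρ_κ * f` with `ρ_κ(y) = κ⁻² ρ(y/κ)`. -/
def moll (ρ : (Fin 2 → ℝ) → ℝ) (κ : ℝ) (f : (Fin 2 → ℝ) → ℝ) (x : Fin 2 → ℝ) : ℝ :=
  ∫ y, (κ ^ 2)⁻¹ * ρ (κ⁻¹ • y) * f (x - y)

/-- The horizontal derivative `∂̄ = ∂_α` on `𝕋²`. -/
def pd2 (α : Fin 2) (g : (Fin 2 → ℝ) → ℝ) : (Fin 2 → ℝ) → ℝ :=
  fun x => fderiv ℝ g x (Pi.single α 1)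

/-
For `x` fixed, `[η ⋆ ·, h] u` is at `x` the convolution of `u` with the kernel
`y ↦ η(y) (h(x - y) - h(x))`. If `u = ∂_v f`, integrating by parts moves the derivative onto this
kernel, which the Lipschitz bound on `h` dominates by `|y| |∂_v η(y)| + |v| |η(y)|`. The `L¹` norm
of the latter does not change when `η` is rescaled to `η_κ`, so Young's inequality gives the `L²`
estimate uniformly in `κ`. As `∂_j [η ⋆ ·, h] ∂_v f = [η ⋆ ·, ∂_j h] ∂_v f + [η ⋆ ·, h] ∂_v ∂_j f`,
the `H¹` estimate follows. For `0 < s < 1`, splitting `f` at the frequencies with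
`t (1 + |k|²) ≤ 1` bounds the energy with weight `min 1 (t (1 + |k|²))` for every `t > 0`, and
integrating against `t^(-s-1) dt` turns this weight into a multiple of `(1 + |k|²)^s`.
-/

open ContinuousLinearMap (lsmul)

open scoped Convolution ENNReal NNReal

section DirectionalDerivative

variable {V E : Type*} [NormedAddCommGroup V] [NormedSpace ℝ V]
  [NormedAddCommGroup E] [NormedSpace ℝ E]

/-- The directional derivative `∂_v f`, as a function of the base point. -/
def dirDeriv (v : V) (f : V → E) (x : V) : E := fderiv ℝ f x v

theorem continuous_dirDeriv {f : V → E} (hf : ContDiff ℝ 1 f) (v : V) :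
    Continuous (dirDeriv v f) :=
  (hf.continuous_fderiv one_ne_zero).clm_apply continuous_const

theorem contDiff_dirDeriv {n : ℕ} {f : V → E} (hf : ContDiff ℝ (n + 1) f) (v : V) :
    ContDiff ℝ n (dirDeriv v f) :=
  (hf.fderiv_right le_rfl).clm_apply contDiff_const

theorem periodic_dirDeriv {f : V → E} {c : V} (hf : Function.Periodic f c) (v : V) :
    Function.Periodic (dirDeriv v f) c := fun x => by
  simp only [dirDeriv, ← fderiv_comp_add_right, hf.funext]

theorem dirDeriv_add {f g : V → E} (hf : Differentiable ℝ f) (hg : Differentiable ℝ g) (v : V) :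
    dirDeriv v (f + g) = dirDeriv v f + dirDeriv v g := by
  ext x
  simp [dirDeriv, fderiv_add (hf x) (hg x)]

theorem dirDeriv_smul {h : V → ℝ} {f : V → E} (hh : Differentiable ℝ h)
    (hf : Differentiable ℝ f) (v : V) :
    dirDeriv v (h • f) = h • dirDeriv v f + dirDeriv v h • f := by
  ext x
  simp [dirDeriv, fderiv_smul (hh x) (hf x)]

theorem dirDeriv_comm {f : V → E} (hf : ContDiff ℝ 2 f) (v w : V) :
    dirDeriv v (dirDeriv w f) = dirDeriv w (dirDeriv v f) := by
  have hd : Differentiable ℝ (fderiv ℝ f) := (hf.fderiv_right le_rfl).differentiable one_ne_zero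
  have hsecond (a b x : V) : dirDeriv a (dirDeriv b f) x = fderiv ℝ (fderiv ℝ f) x a b := by
    change fderiv ℝ (fun y => fderiv ℝ f y b) x a = _
    simp [fderiv_clm_apply (hd x) (differentiableAt_const b)]
  ext x
  rw [hsecond, hsecond]
  exact hf.contDiffAt.isSymmSndFDerivAt (by simp) v w

theorem enorm_dirDeriv_le {h : V → E} {L : ℝ≥0} (hL : LipschitzWith L h) (v x : V) :
    ‖dirDeriv v h x‖ₑ ≤ L * ‖v‖ₑ :=
  (ContinuousLinearMap.le_opENorm _ v).trans <| by
    gcongr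
    exact enorm_le_coe.mpr (norm_fderiv_le_of_lipschitz ℝ hL)

/-- The nonnegative kernel `|y| |∂_v η(y)| + |v| |η(y)|`, which dominates the kernel of
`f ↦ [η ⋆ ·, h] ∂_v f` when `h` is `1`-Lipschitz. -/
def commutatorKernel (v : V) (η : V → ℝ) (y : V) : ℝ≥0∞ :=
  ‖y‖ₑ * ‖dirDeriv v η y‖ₑ + ‖v‖ₑ * ‖η y‖ₑ

theorem measurable_commutatorKernel [MeasurableSpace V] [BorelSpace V]
    [FiniteDimensional ℝ V] {η : V → ℝ}
    (hη : ContDiff ℝ 1 η) (v : V) : Measurable (commutatorKernel v η) :=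
  (measurable_enorm.mul (continuous_dirDeriv hη v).measurable.enorm).add
    (hη.continuous.measurable.enorm.const_mul _)

theorem enorm_dirDeriv_mul_sub_le {η h : V → ℝ} {L : ℝ≥0} (hη : ContDiff ℝ 1 η)
    (hh : ContDiff ℝ 1 h) (hL : LipschitzWith L h) (v x y : V) :
    ‖dirDeriv v (fun z => η z * (h (x - z) - h x)) y‖ₑ ≤ L * commutatorKernel v η y := by
  have hrefl : HasFDerivAt (fun z => h (x - z) - h x) (-fderiv ℝ h (x - y)) y := by
    simpa [Function.comp_def] using (((hh.differentiable one_ne_zero (x - y)).hasFDerivAt.comp y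
      ((hasFDerivAt_id y).const_sub x)).sub_const (h x))
  have hprod : dirDeriv v (fun z => η z * (h (x - z) - h x)) y =
      (h (x - y) - h x) * dirDeriv v η y - η y * dirDeriv v h (x - y) := by
    rw [dirDeriv, ((hη.differentiable one_ne_zero y).hasFDerivAt.fun_mul hrefl).fderiv]
    simp [dirDeriv]
    ring
  have hosc : ‖h (x - y) - h x‖ₑ ≤ L * ‖y‖ₑ := by
    simpa [edist_eq_enorm_sub] using hL (x - y) x
  calc ‖dirDeriv v (fun z => η z * (h (x - z) - h x)) y‖ₑ
      ≤ ‖h (x - y) - h x‖ₑ * ‖dirDeriv v η y‖ₑ + ‖η y‖ₑ * ‖dirDeriv v h (x - y)‖ₑ := by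
        rw [hprod, ← enorm_mul, ← enorm_mul]
        exact enorm_sub_le
    _ ≤ L * ‖y‖ₑ * ‖dirDeriv v η y‖ₑ + ‖η y‖ₑ * (L * ‖v‖ₑ) := by
        gcongr
        exact enorm_dirDeriv_le hL v _
    _ = L * commutatorKernel v η y := by
        rw [commutatorKernel]
        ring

end DirectionalDerivative

section Convolution

variable {V E : Type*} [NormedAddCommGroup V] [NormedSpace ℝ V] [FiniteDimensional ℝ V]
  [MeasurableSpace V] [BorelSpace V] [NormedAddCommGroup E] [NormedSpace ℝ E]
  {μ : Measure V} [μ.IsAddHaarMeasure] {η : V → ℝ} {u : V → E}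

theorem integrable_smul_comp_sub (hη : Continuous η) (hηc : HasCompactSupport η)
    (hu : Continuous u) (x : V) : Integrable (fun y => η y • u (x - y)) μ :=
  hηc.convolutionExists_left (lsmul ℝ ℝ) hη hu.locallyIntegrable x

theorem convolution_dirDeriv (hη : ContDiff ℝ 1 η) (hηc : HasCompactSupport η)
    (hu : ContDiff ℝ 1 u) (v : V) :
    η ⋆[lsmul ℝ ℝ, μ] dirDeriv v u = dirDeriv v η ⋆[lsmul ℝ ℝ, μ] u := by
  ext x
  have hrefl (y : V) : HasFDerivAt (fun y => u (x - y)) (-fderiv ℝ u (x - y)) y := by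
    simpa [Function.comp_def] using ((hu.differentiable one_ne_zero (x - y)).hasFDerivAt.comp y
      ((hasFDerivAt_id y).const_sub x))
  have hηu' : Integrable (fun y => η y • -fderiv ℝ u (x - y) v) μ := by
    simp only [smul_neg]
    exact (integrable_smul_comp_sub hη.continuous hηc (continuous_dirDeriv hu v) x).neg
  have hibp := integral_bilinear_hasFDerivAt_right_eq_neg_left_of_integrable
    (B := lsmul ℝ ℝ)
    (integrable_smul_comp_sub (continuous_dirDeriv hη v) (hηc.fderiv_apply ℝ v) hu.continuous x)
    hηu' (integrable_smul_comp_sub hη.continuous hηc hu.continuous x)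
    (fun y _ => (hη.differentiable one_ne_zero y).hasFDerivAt) (fun y _ => hrefl y)
  simpa [convolution_def, dirDeriv, integral_neg] using hibp

theorem contDiff_convolution (hη : ContDiff ℝ 1 η) (hηc : HasCompactSupport η)
    (hu : Continuous u) : ContDiff ℝ 1 (η ⋆[lsmul ℝ ℝ, μ] u) :=
  hηc.contDiff_convolution_left _ hη hu.locallyIntegrable

theorem dirDeriv_convolution (hη : ContDiff ℝ 1 η) (hηc : HasCompactSupport η)
    (hu : ContDiff ℝ 1 u) (v : V) :
    dirDeriv v (η ⋆[lsmul ℝ ℝ, μ] u) = η ⋆[lsmul ℝ ℝ, μ] dirDeriv v u := by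
  ext x
  have hloc : LocallyIntegrable u μ := hu.continuous.locallyIntegrable
  have hderiv := hηc.hasFDerivAt_convolution_left (lsmul ℝ ℝ : ℝ →L[ℝ] E →L[ℝ] E) hη hloc x
  have hint := (hηc.fderiv ℝ).convolutionExists_left
    ((lsmul ℝ ℝ : ℝ →L[ℝ] E →L[ℝ] E).precompL V) (hη.continuous_fderiv one_ne_zero) hloc x
  rw [convolution_dirDeriv hη hηc hu, dirDeriv, hderiv.fderiv, convolution_def,
    ContinuousLinearMap.integral_apply hint]
  rfl

end Convolution

section Commutator

variable {V E : Type*} [NormedAddCommGroup V] [MeasurableSpace V]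
  [NormedAddCommGroup E] [NormedSpace ℝ E]

/-- The commutator `[η ⋆ ·, h] u = η ⋆ (h u) - h (η ⋆ u)` of the convolution with `η` and the
multiplication by `h`. -/
def convCommutator (μ : Measure V) (η h : V → ℝ) (u : V → E) : V → E :=
  η ⋆[lsmul ℝ ℝ, μ] (h • u) - h • (η ⋆[lsmul ℝ ℝ, μ] u)

theorem periodic_convCommutator {μ : Measure V} {η h : V → ℝ} {u : V → E} {c : V}
    (hh : Function.Periodic h c) (hu : Function.Periodic u c) :
    Function.Periodic (convCommutator μ η h u) c := fun x => by
  simp only [convCommutator, Pi.sub_apply, Pi.smul_apply', convolution_def, hh x,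
    add_sub_right_comm x c, hh _, hu _]

variable [NormedSpace ℝ V] [BorelSpace V] [FiniteDimensional ℝ V] {μ : Measure V}
  [μ.IsAddHaarMeasure] {η h : V → ℝ} {u : V → E}

theorem convCommutator_eq_convolution (hη : Continuous η) (hηc : HasCompactSupport η)
    (hh : Continuous h) (hu : Continuous u) (x : V) :
    convCommutator μ η h u x = ((fun y => η y * (h (x - y) - h x)) ⋆[lsmul ℝ ℝ, μ] u) x := by
  have hhu := integrable_smul_comp_sub (μ := μ) hη hηc (hh.smul hu) x
  have hxu := (integrable_smul_comp_sub (μ := μ) hη hηc hu x).smul (h x)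
  simp only [convCommutator, Pi.sub_apply, Pi.smul_apply', convolution_def,
    ContinuousLinearMap.lsmul_apply]
  rw [← integral_smul]
  refine (integral_sub hhu hxu).symm.trans (integral_congr_ae (.of_forall fun y => ?_))
  simp only [Pi.smul_apply, Pi.smul_apply', smul_smul, ← sub_smul]
  ring_nf

theorem convCommutator_add {u' : V → E} (hη : Continuous η) (hηc : HasCompactSupport η)
    (hh : Continuous h) (hu : Continuous u) (hu' : Continuous u') :
    convCommutator μ η h (u + u') = convCommutator μ η h u + convCommutator μ η h u' := by
  ext x
  have hker : Continuous fun y => η y * (h (x - y) - h x) := by fun_prop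
  simp only [Pi.add_apply, convCommutator_eq_convolution hη hηc hh (hu.add hu'),
    convCommutator_eq_convolution hη hηc hh hu, convCommutator_eq_convolution hη hηc hh hu',
    convolution_def, map_add]
  exact integral_add (integrable_smul_comp_sub hker hηc.mul_right hu x)
    (integrable_smul_comp_sub hker hηc.mul_right hu' x)

theorem continuous_convCommutator (hη : Continuous η) (hηc : HasCompactSupport η)
    (hh : Continuous h) (hu : Continuous u) : Continuous (convCommutator μ η h u) :=
  (hηc.continuous_convolution_left _ hη (hh.smul hu).locallyIntegrable).sub
    (hh.smul (hηc.continuous_convolution_left _ hη hu.locallyIntegrable))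

theorem contDiff_convCommutator (hη : ContDiff ℝ 1 η) (hηc : HasCompactSupport η)
    (hh : ContDiff ℝ 1 h) (hu : Continuous u) : ContDiff ℝ 1 (convCommutator μ η h u) :=
  (contDiff_convolution hη hηc (hh.continuous.smul hu)).sub
    (hh.smul (contDiff_convolution hη hηc hu))

theorem dirDeriv_convCommutator (hη : ContDiff ℝ 1 η) (hηc : HasCompactSupport η)
    (hh : ContDiff ℝ 1 h) (hu : ContDiff ℝ 1 u) (w : V) :
    dirDeriv w (convCommutator μ η h u) =
      convCommutator μ η (dirDeriv w h) u + convCommutator μ η h (dirDeriv w u) := by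
  have hconv {f : V → E} (hf : Continuous f) : Differentiable ℝ (η ⋆[lsmul ℝ ℝ, μ] f) :=
    (contDiff_convolution hη hηc hf).differentiable one_ne_zero
  have hh' := hh.differentiable one_ne_zero
  have hloc {f : V → E} (hf : Continuous f) : ConvolutionExists η f (lsmul ℝ ℝ) μ :=
    hηc.convolutionExists_left _ hη.continuous hf.locallyIntegrable
  have hsub : dirDeriv w (convCommutator μ η h u) =
      dirDeriv w (η ⋆[lsmul ℝ ℝ, μ] (h • u)) - dirDeriv w (h • (η ⋆[lsmul ℝ ℝ, μ] u)) :=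
    funext fun x => congrArg (· w) (fderiv_sub (hconv (hh.continuous.smul hu.continuous) x)
      ((hh' x).smul (hconv hu.continuous x)))
  rw [hsub, dirDeriv_convolution hη hηc (hh.smul hu),
    dirDeriv_smul hh' (hu.differentiable one_ne_zero), dirDeriv_smul hh' (hconv hu.continuous),
    dirDeriv_convolution hη hηc hu,
    (hloc (hh.continuous.smul (continuous_dirDeriv hu w))).distrib_add
      (hloc ((continuous_dirDeriv hh w).smul hu.continuous))]
  simp only [convCommutator]
  abel

theorem enorm_convCommutator_le {M : ℝ≥0∞} (hη : Continuous η) (hηc : HasCompactSupport η)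
    (hh : Continuous h) (hM : ∀ x, ‖h x‖ₑ ≤ M) (hu : Continuous u) (x : V) :
    ‖convCommutator μ η h u x‖ₑ ≤ ∫⁻ y, 2 * M * ‖η y‖ₑ * ‖u (x - y)‖ₑ ∂μ := by
  rw [convCommutator_eq_convolution hη hηc hh hu, convolution_def]
  refine (enorm_integral_le_lintegral_enorm _).trans (lintegral_mono fun y => ?_)
  have hosc : ‖h (x - y) - h x‖ₑ ≤ 2 * M :=
    (enorm_sub_le).trans ((add_le_add (hM _) (hM _)).trans_eq (two_mul M).symm)
  rw [ContinuousLinearMap.lsmul_apply, enorm_smul, enorm_mul, mul_comm ‖η y‖ₑ]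
  gcongr

theorem enorm_convCommutator_dirDeriv_le {L : ℝ≥0} (hη : ContDiff ℝ 1 η)
    (hηc : HasCompactSupport η) (hh : ContDiff ℝ 1 h) (hL : LipschitzWith L h)
    (hu : ContDiff ℝ 1 u) (v x : V) :
    ‖convCommutator μ η h (dirDeriv v u) x‖ₑ ≤
      ∫⁻ y, L * commutatorKernel v η y * ‖u (x - y)‖ₑ ∂μ := by
  have hker : ContDiff ℝ 1 fun y => η y * (h (x - y) - h x) := by fun_prop
  rw [convCommutator_eq_convolution hη.continuous hηc hh.continuous (continuous_dirDeriv hu v),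
    convolution_dirDeriv hker hηc.mul_right hu, convolution_def]
  refine (enorm_integral_le_lintegral_enorm _).trans (lintegral_mono fun y => ?_)
  rw [ContinuousLinearMap.lsmul_apply, enorm_smul]
  gcongr
  exact enorm_dirDeriv_mul_sub_le hη hh hL v x y

end Commutator

section Rescaling

variable {V : Type*} [NormedAddCommGroup V] [NormedSpace ℝ V]

/-- The kernel `ρ_κ(y) = κ⁻ᵈ ρ(y / κ)` on a space of dimension `d`, at scale `κ`. -/
def rescaledKernel (ρ : V → ℝ) (κ : ℝ) (y : V) : ℝ :=
  (κ ^ Module.finrank ℝ V)⁻¹ * ρ (κ⁻¹ • y)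

variable {ρ : V → ℝ} {κ : ℝ}

theorem contDiff_rescaledKernel {n : WithTop ℕ∞} (hρ : ContDiff ℝ n ρ) (κ : ℝ) :
    ContDiff ℝ n (rescaledKernel ρ κ) :=
  contDiff_const.mul (hρ.comp (contDiff_const_smul κ⁻¹))

theorem hasCompactSupport_rescaledKernel (hρc : HasCompactSupport ρ) (hκ : κ ≠ 0) :
    HasCompactSupport (rescaledKernel ρ κ) :=
  (hρc.comp_homeomorph (Homeomorph.smulOfNeZero κ⁻¹ (inv_ne_zero hκ))).mul_left

theorem dirDeriv_rescaledKernel (hρ : Differentiable ℝ ρ) (κ : ℝ) (v y : V) :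
    dirDeriv v (rescaledKernel ρ κ) y =
      (κ ^ Module.finrank ℝ V)⁻¹ * (κ⁻¹ * dirDeriv v ρ (κ⁻¹ • y)) := by
  have hscale : HasFDerivAt (fun z => ρ (κ⁻¹ • z))
      ((fderiv ℝ ρ (κ⁻¹ • y)).comp (κ⁻¹ • ContinuousLinearMap.id ℝ V)) y :=
    (hρ (κ⁻¹ • y)).hasFDerivAt.comp y ((hasFDerivAt_id y).const_smul κ⁻¹)
  have hmul : HasFDerivAt (rescaledKernel ρ κ) _ y :=
    hscale.const_mul (κ ^ Module.finrank ℝ V)⁻¹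
  rw [dirDeriv, hmul.fderiv]
  simp [dirDeriv]

/-- The length `|y|` compensates exactly the factor `κ⁻¹` which `∂_v` produces. -/
theorem commutatorKernel_rescaledKernel (hρ : Differentiable ℝ ρ) (hκ : 0 < κ) (v y : V) :
    commutatorKernel v (rescaledKernel ρ κ) y =
      ENNReal.ofReal (κ ^ Module.finrank ℝ V)⁻¹ * commutatorKernel v ρ (κ⁻¹ • y) := by
  rw [commutatorKernel, commutatorKernel, dirDeriv_rescaledKernel hρ, rescaledKernel,
    ← Real.enorm_of_nonneg (by positivity)]
  simp only [enorm_mul, enorm_smul]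
  ring

variable [MeasurableSpace V] [BorelSpace V] {μ : Measure V} [μ.IsAddHaarMeasure]

theorem lintegral_commutatorKernel_ne_top (hρ : ContDiff ℝ 1 ρ) (hρc : HasCompactSupport ρ)
    (v : V) : ∫⁻ y, commutatorKernel v ρ y ∂μ ≠ ∞ := by
  have hcont : Continuous fun y => ‖y‖ * ‖dirDeriv v ρ y‖ + ‖v‖ * ‖ρ y‖ := by
    have := continuous_dirDeriv hρ v
    fun_prop
  have hsupp : HasCompactSupport fun y => ‖y‖ * ‖dirDeriv v ρ y‖ + ‖v‖ * ‖ρ y‖ :=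
    (hρc.fderiv_apply ℝ v).norm.mul_left.add hρc.norm.mul_left
  convert (hcont.integrable_of_hasCompactSupport hsupp (μ := μ)).hasFiniteIntegral.ne using 2
  ext y
  rw [Real.enorm_of_nonneg (by positivity), ENNReal.ofReal_add (by positivity) (by positivity),
    ENNReal.ofReal_mul (norm_nonneg _), ENNReal.ofReal_mul (norm_nonneg _)]
  simp only [ofReal_norm, commutatorKernel]

variable [FiniteDimensional ℝ V]

theorem lintegral_comp_inv_smul (F : V → ℝ≥0∞) (hκ : 0 < κ) :
    ∫⁻ y, F (κ⁻¹ • y) ∂μ = ENNReal.ofReal (κ ^ Module.finrank ℝ V) * ∫⁻ y, F y ∂μ := by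
  have hκ' : κ⁻¹ ≠ 0 := (inv_pos.mpr hκ).ne'
  have hmap : ∫⁻ y, F (κ⁻¹ • y) ∂μ = ∫⁻ y, F y ∂(μ.map (κ⁻¹ • ·)) :=
    ((Homeomorph.smulOfNeZero κ⁻¹ hκ').measurableEmbedding.lintegral_map F).symm
  rw [hmap, Measure.map_addHaar_smul μ hκ', lintegral_smul_measure]
  simp [abs_of_pos hκ]

theorem lintegral_commutatorKernel_rescaledKernel (hρ : Differentiable ℝ ρ) (hκ : 0 < κ) (v : V) :
    ∫⁻ y, commutatorKernel v (rescaledKernel ρ κ) y ∂μ = ∫⁻ y, commutatorKernel v ρ y ∂μ := by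
  have hpow : 0 < κ ^ Module.finrank ℝ V := by positivity
  simp only [commutatorKernel_rescaledKernel hρ hκ]
  rw [lintegral_const_mul' _ _ ENNReal.ofReal_ne_top, lintegral_comp_inv_smul _ hκ, ← mul_assoc,
    ← ENNReal.ofReal_mul (inv_nonneg.mpr hpow.le), inv_mul_cancel₀ hpow.ne', ENNReal.ofReal_one,
    one_mul]

end Rescaling

attribute [local instance] instMeasureSpaceUnitAddCircle

theorem isAddHaarMeasure_volume_unitAddCircle :
    Measure.IsAddHaarMeasure (volume : Measure UnitAddCircle) :=
  inferInstanceAs (Measure.IsAddHaarMeasure AddCircle.haarAddCircle)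

attribute [local instance] isAddHaarMeasure_volume_unitAddCircle

theorem isProbabilityMeasure_volume_unitAddCircle :
    IsProbabilityMeasure (volume : Measure UnitAddCircle) :=
  inferInstanceAs (IsProbabilityMeasure AddCircle.haarAddCircle)

attribute [local instance] isProbabilityMeasure_volume_unitAddCircle

section Torus

variable {ι E : Type*}

/-- Functions on `ℝ^ι` that are invariant under the lattice `ℤ^ι`, i.e. functions on the torus. -/
def IsIntPeriodic (f : (ι → ℝ) → E) : Prop :=
  ∀ n : ι → ℤ, Function.Periodic f fun i => (n i : ℝ)

/-- The unit cube `(0, 1]^ι`, a fundamental domain of the torus. -/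
def unitCube (ι : Type*) : Set (ι → ℝ) := {x | ∀ i, x i ∈ Set.Ioc (0 : ℝ) 1}

/-- The quotient map `ℝ^ι → (ℝ / ℤ)^ι`. -/
def toTorus (x : ι → ℝ) : UnitAddTorus ι := fun i => (x i : UnitAddCircle)

/-- The function on the torus that has the same values as `f` on the unit cube. -/
def torusLift (f : (ι → ℝ) → E) (q : UnitAddTorus ι) : E :=
  f fun i => (AddCircle.equivIoc 1 0 (q i) : ℝ)

theorem isIntPeriodic_of_single [Finite ι] [DecidableEq ι] {f : (ι → ℝ) → E}
    (hf : ∀ (x : ι → ℝ) (i : ι), f (x + Pi.single i 1) = f x) : IsIntPeriodic f := fun n => by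
  cases nonempty_fintype ι
  have hsum : (fun i => (n i : ℝ)) = ∑ i, n i • (Pi.single i 1 : ι → ℝ) := by
    ext j
    simp [Finset.sum_apply, Pi.single_apply]
  rw [hsum]
  exact Finset.sum_induction _ (Function.Periodic f) (fun _ _ => Function.Periodic.add_period)
    (fun x => by rw [add_zero]) fun i _ => Function.Periodic.zsmul (fun x => hf x i) (n i)

theorem isOpenQuotientMap_toTorus : IsOpenQuotientMap (toTorus : (ι → ℝ) → UnitAddTorus ι) :=
  .piMap fun _ => QuotientAddGroup.isOpenQuotientMap_mk

theorem torusLift_toTorus {f : (ι → ℝ) → E} (hf : IsIntPeriodic f) (x : ι → ℝ) :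
    torusLift f (toTorus x) = f x := by
  have hrep (i : ι) : ∃ n : ℤ, (AddCircle.equivIoc 1 0 (x i : UnitAddCircle) : ℝ) = x i + n := by
    obtain ⟨n, hn⟩ := AddSubgroup.mem_zmultiples_iff.mp (QuotientAddGroup.eq.mp
      ((AddCircle.equivIoc 1 0).symm_apply_apply (x i : UnitAddCircle)).symm)
    exact ⟨n, by simpa [eq_neg_add_iff_add_eq, eq_comm] using hn⟩
  choose n hn using hrep
  exact (congrArg f (funext hn)).trans (hf n x)

theorem continuous_torusLift [TopologicalSpace E] {f : (ι → ℝ) → E} (hf : IsIntPeriodic f)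
    (hfc : Continuous f) : Continuous (torusLift f) := by
  rw [isOpenQuotientMap_toTorus.isQuotientMap.continuous_iff,
    show torusLift f ∘ toTorus = f from funext (torusLift_toTorus hf)]
  exact hfc

theorem IsIntPeriodic.exists_norm_le [NormedAddCommGroup E] {f : (ι → ℝ) → E}
    (hf : IsIntPeriodic f) (hfc : Continuous f) : ∃ M, ∀ x, ‖f x‖ ≤ M := by
  obtain ⟨M, hM⟩ := isCompact_univ.exists_bound_of_continuousOn
    (continuous_torusLift hf hfc).continuousOn
  exact ⟨M, fun x => torusLift_toTorus hf x ▸ hM (toTorus x) trivial⟩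

theorem IsIntPeriodic.comp_left {F : Type*} {f : (ι → ℝ) → E} (hf : IsIntPeriodic f) (Φ : E → F) :
    IsIntPeriodic fun x => Φ (f x) := fun n => (hf n).comp Φ

theorem IsIntPeriodic.comp_add_right {f : (ι → ℝ) → E} (hf : IsIntPeriodic f) (z : ι → ℝ) :
    IsIntPeriodic fun x => f (x + z) := fun n => (hf n).add_const z

theorem torusLift_comp_add_right {f : (ι → ℝ) → E} (hf : IsIntPeriodic f) (z : ι → ℝ)
    (q : UnitAddTorus ι) : torusLift (fun x => f (x + z)) q = torusLift f (q + toTorus z) := by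
  obtain ⟨x, rfl⟩ := isOpenQuotientMap_toTorus.surjective q
  exact (torusLift_toTorus (hf.comp_add_right z) x).trans (torusLift_toTorus hf (x + z)).symm

theorem measurableSet_unitCube [Countable ι] : MeasurableSet (unitCube ι) :=
  MeasurableSet.univ_pi' fun _ => measurableSet_Ioc

theorem unitCube_subset_Icc : unitCube ι ⊆ Set.Icc 0 1 :=
  fun _ hx => ⟨fun i => (hx i).1.le, fun i => (hx i).2⟩

variable [Fintype ι]

theorem isIntPeriodic_dirDeriv [NormedAddCommGroup E] [NormedSpace ℝ E] {f : (ι → ℝ) → E}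
    (hf : IsIntPeriodic f) (v : ι → ℝ) : IsIntPeriodic (dirDeriv v f) :=
  fun n => periodic_dirDeriv (hf n) v

theorem volume_unitCube_ne_top : volume (unitCube ι) ≠ ⊤ :=
  ((measure_mono unitCube_subset_Icc).trans_lt isCompact_Icc.measure_lt_top).ne

theorem integrableOn_unitCube [NormedAddCommGroup E] {f : (ι → ℝ) → E} (hf : Continuous f) :
    IntegrableOn f (unitCube ι) :=
  hf.integrableOn_Icc.mono_set unitCube_subset_Icc

theorem lintegral_torusLift {f : (ι → ℝ) → ℝ≥0∞} (hf : IsIntPeriodic f) :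
    ∫⁻ q, torusLift f q = ∫⁻ x in unitCube ι, f x := by
  simp only [UnitAddTorus.lintegral_preimage _ 0, ← torusLift_toTorus hf, Pi.zero_apply, zero_add]
  rfl

theorem integral_torusLift [NormedAddCommGroup E] [NormedSpace ℝ E] {f : (ι → ℝ) → E}
    (hf : IsIntPeriodic f) : ∫ q, torusLift f q = ∫ x in unitCube ι, f x := by
  simp only [UnitAddTorus.integral_preimage _ 0, ← torusLift_toTorus hf, Pi.zero_apply, zero_add]
  rfl

theorem lintegral_unitCube_add_right {f : (ι → ℝ) → ℝ≥0∞} (hf : IsIntPeriodic f) (z : ι → ℝ) :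
    ∫⁻ x in unitCube ι, f (x + z) = ∫⁻ x in unitCube ι, f x := by
  rw [← lintegral_torusLift hf, ← lintegral_torusLift (hf.comp_add_right z),
    ← lintegral_add_right_eq_self (torusLift f) (toTorus z)]
  simp only [torusLift_comp_add_right hf]

theorem integral_unitCube_add_right [NormedAddCommGroup E] [NormedSpace ℝ E] {f : (ι → ℝ) → E}
    (hf : IsIntPeriodic f) (z : ι → ℝ) :
    ∫ x in unitCube ι, f (x + z) = ∫ x in unitCube ι, f x := by
  rw [← integral_torusLift hf, ← integral_torusLift (hf.comp_add_right z),
    ← integral_add_right_eq_self (torusLift f) (toTorus z)]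
  simp only [torusLift_comp_add_right hf]

theorem integral_unitCube_dirDeriv [NormedAddCommGroup E] [NormedSpace ℝ E]
    {f : (ι → ℝ) → E} (hf : ContDiff ℝ 1 f) (hfp : IsIntPeriodic f) (v : ι → ℝ) :
    ∫ x in unitCube ι, dirDeriv v f x = 0 := by
  have hcont := continuous_dirDeriv hf v
  obtain ⟨M, hM⟩ := IsIntPeriodic.exists_norm_le
    (isIntPeriodic_dirDeriv hfp v) hcont
  have hderiv (x : ι → ℝ) (t : ℝ) :
      HasDerivAt (fun t : ℝ => f (x + t • v)) (dirDeriv v f (x + t • v)) t := by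
    have hline : HasDerivAt (fun t : ℝ => x + t • v) v t := by
      simpa using ((hasDerivAt_id t).smul_const v).const_add x
    exact (hf.differentiable one_ne_zero _).hasFDerivAt.comp_hasDerivAt t hline
  have : IsFiniteMeasure (volume.restrict (unitCube ι)) :=
    isFiniteMeasure_restrict.mpr volume_unitCube_ne_top
  have hshift (t : ℝ) : Continuous fun x => x + t • v := continuous_add_const (t • v)
  have hdiff := (hasDerivAt_integral_of_dominated_loc_of_deriv_le (x₀ := (0 : ℝ))
    (μ := volume.restrict (unitCube ι)) (F := fun t x => f (x + t • v))
    (F' := fun t x => dirDeriv v f (x + t • v)) (bound := fun _ => M) Filter.univ_mem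
    (.of_forall fun t => (hf.continuous.comp (hshift t)).aestronglyMeasurable)
    (integrableOn_unitCube (hf.continuous.comp (hshift 0)))
    (hcont.comp (hshift 0)).aestronglyMeasurable (.of_forall fun x t _ => hM _)
    (integrable_const M) (.of_forall fun x t _ => hderiv x t)).2
  simp only [integral_unitCube_add_right hfp, zero_smul, add_zero] at hdiff
  exact hdiff.unique (hasDerivAt_const _ _)

end Torus

section Young

theorem sq_lintegral_mul_le {α : Type*} [MeasurableSpace α] {μ : Measure α} {φ f : α → ℝ≥0∞}
    (hφ : AEMeasurable φ μ) (hf : AEMeasurable f μ) :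
    (∫⁻ a, φ a * f a ∂μ) ^ 2 ≤ (∫⁻ a, φ a ∂μ) * ∫⁻ a, φ a * f a ^ 2 ∂μ := by
  have hsplit (a : α) :
      φ a * f a = φ a ^ (1 / 2 : ℝ) * (φ a * f a ^ 2) ^ (1 / 2 : ℝ) := by
    rw [ENNReal.mul_rpow_of_nonneg _ _ (by norm_num), ← mul_assoc,
      ← ENNReal.rpow_add_of_nonneg _ _ (by norm_num) (by norm_num), ← ENNReal.rpow_natCast_mul]
    norm_num
  have hhalf (x : ℝ≥0∞) : (x ^ (1 / 2 : ℝ)) ^ 2 = x := by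
    rw [← ENNReal.rpow_mul_natCast]
    norm_num
  calc (∫⁻ a, φ a * f a ∂μ) ^ 2
      = (∫⁻ a, φ a ^ (1 / 2 : ℝ) * (φ a * f a ^ 2) ^ (1 / 2 : ℝ) ∂μ) ^ 2 := by
        simp only [← hsplit]
    _ ≤ ((∫⁻ a, φ a ∂μ) ^ (1 / 2 : ℝ) * (∫⁻ a, φ a * f a ^ 2 ∂μ) ^ (1 / 2 : ℝ)) ^ 2 := by
        gcongr
        exact ENNReal.lintegral_mul_norm_pow_le hφ (hφ.mul (hf.pow_const 2)) (by norm_num)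
          (by norm_num) (by norm_num)
    _ = _ := by rw [mul_pow, hhalf, hhalf]

theorem lintegral_unitCube_sq_le_of_le_convolution {ι : Type*} [Fintype ι]
    {φ f g : (ι → ℝ) → ℝ≥0∞} (hφ : Measurable φ) (hf : Measurable f) (hfp : IsIntPeriodic f)
    (hg : ∀ x, g x ≤ ∫⁻ y, φ y * f (x - y)) :
    ∫⁻ x in unitCube ι, g x ^ 2 ≤ (∫⁻ y, φ y) ^ 2 * ∫⁻ x in unitCube ι, f x ^ 2 := by
  have hmeas : Measurable fun p : (ι → ℝ) × (ι → ℝ) => φ p.2 * f (p.1 - p.2) ^ 2 := by fun_prop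
  have hshift (y : ι → ℝ) :
      ∫⁻ x in unitCube ι, f (x - y) ^ 2 = ∫⁻ x in unitCube ι, f x ^ 2 := by
    simpa only [sub_eq_add_neg] using lintegral_unitCube_add_right (hfp.comp_left (· ^ 2)) (-y)
  calc ∫⁻ x in unitCube ι, g x ^ 2
      ≤ ∫⁻ x in unitCube ι, (∫⁻ y, φ y) * ∫⁻ y, φ y * f (x - y) ^ 2 := by
        refine lintegral_mono fun x => (pow_le_pow_left₀ zero_le (hg x) 2).trans ?_
        exact sq_lintegral_mul_le hφ.aemeasurable (by fun_prop)
    _ = (∫⁻ y, φ y) * ∫⁻ y, φ y * ∫⁻ x in unitCube ι, f (x - y) ^ 2 := by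
        rw [lintegral_const_mul _ (by fun_prop), lintegral_lintegral_swap hmeas.aemeasurable]
        congr with y
        rw [lintegral_const_mul _ (by fun_prop)]
    _ = (∫⁻ y, φ y) ^ 2 * ∫⁻ x in unitCube ι, f x ^ 2 := by
        simp only [hshift]
        rw [lintegral_mul_const _ hφ, sq, mul_assoc]

end Young

section FourierSeries

variable {ι : Type*} [Fintype ι]

/-- The character `x ↦ exp(2πi k·x)` of the torus, as a function on `ℝ^ι`. -/
def torusChar (k : ι → ℤ) (x : ι → ℝ) : ℂ :=
  Complex.exp (((2 * Real.pi * ∑ i, (k i : ℝ) * x i : ℝ) : ℂ) * Complex.I)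

theorem torusChar_eq_mFourier (k : ι → ℤ) (x : ι → ℝ) :
    torusChar k x = UnitAddTorus.mFourier k (toTorus x) := by
  simp only [torusChar, UnitAddTorus.mFourier, toTorus, ContinuousMap.coe_mk, fourier_coe_apply,
    ← Complex.exp_sum]
  push_cast
  rw [Finset.mul_sum, Finset.sum_mul]
  congr! 2
  ring

theorem torusChar_add (k l : ι → ℤ) (x : ι → ℝ) :
    torusChar (k + l) x = torusChar k x * torusChar l x := by
  simp only [torusChar_eq_mFourier, UnitAddTorus.mFourier_add]

theorem torusChar_zero (x : ι → ℝ) : torusChar 0 x = 1 := by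
  simp [torusChar]

theorem isIntPeriodic_torusChar (k : ι → ℤ) : IsIntPeriodic (torusChar k) := fun n x => by
  have hn : toTorus (x + fun i => (n i : ℝ)) = toTorus x := by
    ext i
    simp [toTorus]
  rw [torusChar_eq_mFourier, hn, torusChar_eq_mFourier]

theorem contDiff_torusChar {n : WithTop ℕ∞} (k : ι → ℤ) : ContDiff ℝ n (torusChar k) := by
  have hphase : ContDiff ℝ n fun x : ι → ℝ => 2 * Real.pi * ∑ i, (k i : ℝ) * x i := by fun_prop
  exact ((Complex.ofRealCLM.contDiff.comp hphase).mul contDiff_const).cexp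

theorem dirDeriv_torusChar (k : ι → ℤ) (v x : ι → ℝ) :
    dirDeriv v (torusChar k) x =
      ((2 * Real.pi * ∑ i, (k i : ℝ) * v i : ℝ) : ℂ) * Complex.I * torusChar k x := by
  let phase : (ι → ℝ) →L[ℝ] ℝ :=
    (2 * Real.pi) • ∑ i, (k i : ℝ) • ContinuousLinearMap.proj (R := ℝ) (φ := fun _ => ℝ) i
  have hphase (y : ι → ℝ) : phase y = 2 * Real.pi * ∑ i, (k i : ℝ) * y i := by simp [phase]
  have hderiv : HasFDerivAt (fun y => Complex.exp ((phase y : ℂ) * Complex.I)) _ x :=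
    (((Complex.ofRealCLM.comp phase).hasFDerivAt (x := x)).mul_const Complex.I).cexp
  have heq : torusChar k = fun y => Complex.exp ((phase y : ℂ) * Complex.I) := by
    ext y
    rw [torusChar, hphase]
  rw [dirDeriv, heq, hderiv.fderiv]
  simp [hphase]
  ring

/-- The Fourier coefficient `∫ f(x) exp(-2πi k·x) dx` over the unit cube. -/
def torusFourierCoeff (f : (ι → ℝ) → ℂ) (k : ι → ℤ) : ℂ :=
  ∫ x in unitCube ι, torusChar (-k) x * f x

theorem integrableOn_torusChar_mul {f : (ι → ℝ) → ℂ} (hf : Continuous f) (k : ι → ℤ) :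
    IntegrableOn (fun x => torusChar k x * f x) (unitCube ι) :=
  integrableOn_unitCube ((contDiff_torusChar (n := 0) k).continuous.mul hf)

theorem torusFourierCoeff_add {f g : (ι → ℝ) → ℂ} (hf : Continuous f) (hg : Continuous g) :
    torusFourierCoeff (f + g) = torusFourierCoeff f + torusFourierCoeff g := by
  ext k
  simp only [torusFourierCoeff, Pi.add_apply, mul_add]
  exact integral_add (integrableOn_torusChar_mul hf (-k)) (integrableOn_torusChar_mul hg (-k))

theorem torusFourierCoeff_const_mul (c : ℂ) (f : (ι → ℝ) → ℂ) (k : ι → ℤ) :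
    torusFourierCoeff (fun x => c * f x) k = c * torusFourierCoeff f k := by
  simp only [torusFourierCoeff, mul_left_comm _ c, integral_const_mul]

theorem torusFourierCoeff_eq_mFourierCoeff {f : (ι → ℝ) → ℂ} (hf : IsIntPeriodic f) (k : ι → ℤ) :
    torusFourierCoeff f k = UnitAddTorus.mFourierCoeff (torusLift f) k := by
  have hprod : IsIntPeriodic fun x => torusChar (-k) x * f x := fun n x =>
    congrArg₂ (· * ·) (isIntPeriodic_torusChar (-k) n x) (hf n x)
  rw [torusFourierCoeff, ← integral_torusLift hprod]
  refine integral_congr_ae (.of_forall fun q => ?_)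
  obtain ⟨x, rfl⟩ := isOpenQuotientMap_toTorus.surjective q
  change torusLift _ (toTorus x) = _ • torusLift f (toTorus x)
  rw [torusLift_toTorus hprod, torusLift_toTorus hf, torusChar_eq_mFourier, smul_eq_mul]

theorem torusFourierCoeff_dirDeriv {f : (ι → ℝ) → ℂ} (hf : ContDiff ℝ 1 f)
    (hfp : IsIntPeriodic f) (v : ι → ℝ) (k : ι → ℤ) :
    torusFourierCoeff (dirDeriv v f) k =
      ((2 * Real.pi * ∑ i, (k i : ℝ) * v i : ℝ) : ℂ) * Complex.I * torusFourierCoeff f k := by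
  have hchar : ContDiff ℝ 1 (torusChar (-k)) := contDiff_torusChar (-k)
  have hprod : IsIntPeriodic fun x => torusChar (-k) x * f x := fun n x =>
    congrArg₂ (· * ·) (isIntPeriodic_torusChar (-k) n x) (hfp n x)
  have hleibniz (x : ι → ℝ) : dirDeriv v (fun x => torusChar (-k) x * f x) x =
      torusChar (-k) x * dirDeriv v f x -
        ((2 * Real.pi * ∑ i, (k i : ℝ) * v i : ℝ) : ℂ) * Complex.I * (torusChar (-k) x * f x) := by
    have hmul := fderiv_fun_mul (hchar.differentiable one_ne_zero x)
      (hf.differentiable one_ne_zero x)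
    have hdc := dirDeriv_torusChar (-k) v x
    simp only [dirDeriv] at hdc ⊢
    simp only [hmul, add_apply, smul_apply, hdc,
      smul_eq_mul, Pi.neg_apply, Int.cast_neg, neg_mul, Finset.sum_neg_distrib, mul_neg]
    push_cast
    ring
  have hzero := integral_unitCube_dirDeriv (hchar.mul hf) hprod v
  simp only [hleibniz] at hzero
  rw [integral_sub (integrableOn_torusChar_mul (continuous_dirDeriv hf v) (-k))
    ((integrableOn_torusChar_mul hf.continuous (-k)).const_mul _), integral_const_mul] at hzero
  exact sub_eq_zero.mp hzero

/-- The weighted energy `∑ₖ w(k) |f̂(k)|²`. -/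
def fourierEnergy (w : (ι → ℤ) → ℝ) (f : (ι → ℝ) → ℂ) : ℝ≥0∞ :=
  ∑' k, ENNReal.ofReal (w k) * ‖torusFourierCoeff f k‖ₑ ^ 2

theorem fourierEnergy_one {f : (ι → ℝ) → ℂ} (hf : Continuous f) (hfp : IsIntPeriodic f) :
    fourierEnergy 1 f = ∫⁻ x in unitCube ι, ‖f x‖ₑ ^ 2 := by
  let F : C(UnitAddTorus ι, ℂ) := ⟨torusLift f, continuous_torusLift hfp hf⟩
  have hparseval := UnitAddTorus.hasSum_sq_mFourierCoeff (F.toLp 2 volume ℂ)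
  have hF : ∫ q, ‖F.toLp 2 volume ℂ q‖ ^ 2 = ∫ x in unitCube ι, ‖f x‖ ^ 2 := by
    rw [← integral_torusLift (hfp.comp_left (‖·‖ ^ 2))]
    refine integral_congr_ae ?_
    filter_upwards [ContinuousMap.coeFn_toLp (p := 2) (𝕜 := ℂ) volume F] with q hq
    rw [hq]
    rfl
  simp only [UnitAddTorus.mFourierCoeff_toLp, hF] at hparseval
  have hcoeff (k : ι → ℤ) : UnitAddTorus.mFourierCoeff F k = torusFourierCoeff f k :=
    (torusFourierCoeff_eq_mFourierCoeff hfp k).symm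
  simp only [hcoeff] at hparseval
  have hint : IntegrableOn (fun x => ‖f x‖ ^ 2) (unitCube ι) :=
    integrableOn_unitCube (hf.norm.pow 2)
  calc fourierEnergy 1 f = ∑' k, ENNReal.ofReal (‖torusFourierCoeff f k‖ ^ 2) := by
        simp [fourierEnergy, ENNReal.ofReal_pow]
    _ = ENNReal.ofReal (∫ x in unitCube ι, ‖f x‖ ^ 2) := by
        rw [← hparseval.tsum_eq,
          ENNReal.ofReal_tsum_of_nonneg (fun _ => sq_nonneg _) hparseval.summable]
    _ = ∫⁻ x in unitCube ι, ‖f x‖ₑ ^ 2 := by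
        rw [ofReal_integral_eq_lintegral_ofReal hint (.of_forall fun _ => sq_nonneg _)]
        simp [ENNReal.ofReal_pow]

/-- The weight `1 + |k|²` of the Sobolev space `H¹`; its power `s` is the weight of `Hˢ`. -/
def sobolevWeight (k : ι → ℤ) : ℝ := 1 + ∑ i, (k i : ℝ) ^ 2

theorem one_le_sobolevWeight (k : ι → ℤ) : 1 ≤ sobolevWeight k :=
  le_add_of_nonneg_right (Finset.sum_nonneg fun _ _ => sq_nonneg _)

theorem finite_sobolevWeight_le (R : ℝ) : {k : ι → ℤ | sobolevWeight k ≤ R}.Finite := by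
  refine (Set.Finite.pi' fun _ => Set.finite_Icc (-⌈R⌉) ⌈R⌉).subset fun k (hk : _ ≤ R) i => ?_
  have hsingle : (k i : ℝ) ^ 2 ≤ ∑ j, (k j : ℝ) ^ 2 :=
    Finset.single_le_sum (f := fun j => (k j : ℝ) ^ 2) (fun _ _ => sq_nonneg _)
      (Finset.mem_univ i)
  have hsq : k i ^ 2 ≤ ⌈R⌉ := by
    rw [sobolevWeight] at hk
    exact_mod_cast (show (k i : ℝ) ^ 2 ≤ ⌈R⌉ by linarith [Int.le_ceil R])
  exact abs_le.mp ((Int.le_self_sq |k i|).trans ((sq_abs (k i)).trans_le hsq))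

theorem fourierEnergy_one_dirDeriv_single [DecidableEq ι] {f : (ι → ℝ) → ℂ} (hf : ContDiff ℝ 1 f)
    (hfp : IsIntPeriodic f) (i : ι) :
    fourierEnergy 1 (dirDeriv (Pi.single i 1) f) =
      ENNReal.ofReal (4 * Real.pi ^ 2) * fourierEnergy (fun k => (k i : ℝ) ^ 2) f := by
  rw [fourierEnergy, fourierEnergy, ← ENNReal.tsum_mul_left]
  congr with k
  have hsingle : ∑ j, (k j : ℝ) * (Pi.single i 1 : ι → ℝ) j = k i := by simp [Pi.single_apply]
  have hfactor : ‖((2 * Real.pi * k i : ℝ) : ℂ) * Complex.I‖ₑ ^ 2 =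
      ENNReal.ofReal (4 * Real.pi ^ 2 * (k i : ℝ) ^ 2) := by
    rw [← ofReal_norm, ← ENNReal.ofReal_pow (norm_nonneg _), norm_mul, Complex.norm_I, mul_one,
      Complex.norm_real, Real.norm_eq_abs, sq_abs]
    ring_nf
  rw [torusFourierCoeff_dirDeriv hf hfp, hsingle, enorm_mul, mul_pow, hfactor,
    ENNReal.ofReal_mul (by positivity), Pi.one_apply, ENNReal.ofReal_one, one_mul, mul_assoc]

theorem fourierEnergy_sobolevWeight [DecidableEq ι] {f : (ι → ℝ) → ℂ} (hf : ContDiff ℝ 1 f)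
    (hfp : IsIntPeriodic f) :
    fourierEnergy sobolevWeight f = fourierEnergy 1 f +
      ENNReal.ofReal (4 * Real.pi ^ 2)⁻¹ *
        ∑ i, fourierEnergy 1 (dirDeriv (Pi.single i 1) f) := by
  have hpi : 0 < 4 * Real.pi ^ 2 := by positivity
  simp only [fourierEnergy_one_dirDeriv_single hf hfp]
  rw [← Finset.mul_sum, ← mul_assoc, ← ENNReal.ofReal_mul (by positivity),
    inv_mul_cancel₀ hpi.ne', ENNReal.ofReal_one, one_mul]
  simp only [fourierEnergy]
  rw [← Summable.tsum_finsetSum fun _ _ => ENNReal.summable, ← ENNReal.tsum_add]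
  congr with k
  rw [sobolevWeight, ENNReal.ofReal_add zero_le_one (Finset.sum_nonneg fun _ _ => sq_nonneg _),
    add_mul, ENNReal.ofReal_sum_of_nonneg fun _ _ => sq_nonneg _, Finset.sum_mul, Pi.one_apply]

end FourierSeries

section Truncation

variable {ι : Type*} [Fintype ι]

theorem volume_unitCube : volume (unitCube ι) = 1 := by
  simpa [torusLift] using (lintegral_torusLift (ι := ι) (f := 1) fun _ _ => rfl).symm

theorem integral_unitCube_torusChar (k : ι → ℤ) :
    ∫ x in unitCube ι, torusChar k x = if k = 0 then 1 else 0 := by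
  split_ifs with hk
  · simp [hk, torusChar_zero, Measure.real, volume_unitCube]
  · have hderiv := integral_unitCube_dirDeriv (contDiff_torusChar k) (isIntPeriodic_torusChar k)
      fun i => (k i : ℝ)
    simp only [dirDeriv_torusChar, integral_const_mul] at hderiv
    refine (mul_eq_zero.mp hderiv).resolve_left (mul_ne_zero ?_ Complex.I_ne_zero)
    obtain ⟨i, hi⟩ := Function.ne_iff.mp hk
    have hpos : 0 < ∑ i, (k i : ℝ) * k i :=
      Finset.sum_pos' (fun _ _ => mul_self_nonneg _)
        ⟨i, Finset.mem_univ i, mul_self_pos.mpr (Int.cast_ne_zero.mpr hi)⟩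
    exact Complex.ofReal_ne_zero.mpr (mul_pos Real.two_pi_pos hpos).ne'

theorem torusFourierCoeff_torusChar (l k : ι → ℤ) :
    torusFourierCoeff (torusChar l) k = if l = k then 1 else 0 := by
  simp only [torusFourierCoeff, ← torusChar_add, integral_unitCube_torusChar,
    neg_add_eq_zero, eq_comm]

/-- The Fourier projection `∑_{k ∈ S} f̂(k) exp(2πi k·x)` of `f` onto the frequencies in `S`. -/
def fourierTruncation (S : Finset (ι → ℤ)) (f : (ι → ℝ) → ℂ) (x : ι → ℝ) : ℂ :=
  ∑ k ∈ S, torusFourierCoeff f k * torusChar k x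

variable (S : Finset (ι → ℤ)) (f : (ι → ℝ) → ℂ)

theorem contDiff_fourierTruncation {n : WithTop ℕ∞} : ContDiff ℝ n (fourierTruncation S f) :=
  ContDiff.sum fun k _ => contDiff_const.mul (contDiff_torusChar k)

theorem isIntPeriodic_fourierTruncation : IsIntPeriodic (fourierTruncation S f) := fun n x => by
  simp only [fourierTruncation, isIntPeriodic_torusChar _ n x]

theorem torusFourierCoeff_fourierTruncation (k : ι → ℤ) :
    torusFourierCoeff (fourierTruncation S f) k = if k ∈ S then torusFourierCoeff f k else 0 := by
  have hterm (l : ι → ℤ) : Continuous fun x => torusFourierCoeff f l * torusChar l x :=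
    continuous_const.mul (contDiff_torusChar (n := 0) l).continuous
  calc torusFourierCoeff (fourierTruncation S f) k
      = ∑ l ∈ S, torusFourierCoeff (fun x => torusFourierCoeff f l * torusChar l x) k := by
        simp only [torusFourierCoeff, fourierTruncation, Finset.mul_sum]
        exact integral_finsetSum _ fun l _ => integrableOn_torusChar_mul (hterm l) (-k)
    _ = if k ∈ S then torusFourierCoeff f k else 0 := by
        simp [torusFourierCoeff_const_mul, torusFourierCoeff_torusChar]

end Truncation

section Interpolation

theorem lintegral_Ioi_rpow_mul_min_one_mul {w : ℝ} (hw : 0 < w) (s : ℝ) :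
    ∫⁻ t in Set.Ioi 0, ENNReal.ofReal (t ^ (-s - 1) * min 1 (t * w)) =
      ENNReal.ofReal (w ^ s) * ∫⁻ t in Set.Ioi 0, ENNReal.ofReal (t ^ (-s - 1) * min 1 t) := by
  let F : ℝ → ℝ≥0∞ := (Set.Ioi 0).indicator fun t => ENNReal.ofReal (t ^ (-s - 1) * min 1 t)
  have hscale (t : ℝ) :
      (Set.Ioi 0).indicator (fun t => ENNReal.ofReal (t ^ (-s - 1) * min 1 (t * w))) t =
        ENNReal.ofReal (w ^ (s + 1)) * F (w⁻¹⁻¹ • t) := by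
    by_cases ht : 0 < t
    · have htw : 0 < w * t := mul_pos hw ht
      simp only [F, inv_inv, smul_eq_mul, Set.indicator_of_mem (Set.mem_Ioi.mpr ht),
        Set.indicator_of_mem (Set.mem_Ioi.mpr htw)]
      rw [← ENNReal.ofReal_mul (by positivity), Real.mul_rpow hw.le ht.le, ← mul_assoc,
        ← mul_assoc, ← Real.rpow_add hw, mul_comm w t]
      simp
    · simp [F, ht, hw, mul_pos_iff_of_pos_left]
  rw [← lintegral_indicator measurableSet_Ioi, ← lintegral_indicator measurableSet_Ioi]
  simp only [hscale]
  rw [lintegral_const_mul' _ _ ENNReal.ofReal_ne_top, lintegral_comp_inv_smul F (inv_pos.mpr hw),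
    ← mul_assoc, ← ENNReal.ofReal_mul (by positivity), Module.finrank_self, pow_one,
    Real.rpow_add_one hw.ne', mul_inv_cancel_right₀ hw.ne']

theorem lintegral_Ioi_rpow_mul_min_one_ne_zero (s : ℝ) :
    ∫⁻ t in Set.Ioi 0, ENNReal.ofReal (t ^ (-s - 1) * min 1 t) ≠ 0 := by
  have hsupp : Set.Ioi 0 ⊆
      Function.support (fun t : ℝ => ENNReal.ofReal (t ^ (-s - 1) * min 1 t)) ∩ Set.Ioi 0 :=
    fun t (ht : 0 < t) => ⟨(ENNReal.ofReal_pos.mpr (by positivity)).ne', ht⟩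
  have hvol : volume (Set.Ioi (0 : ℝ)) = ∞ := Real.volume_Ioi
  exact ((setLIntegral_pos_iff (by fun_prop)).mpr
    ((hvol ▸ ENNReal.zero_lt_top).trans_le (measure_mono hsupp))).ne'

theorem lintegral_Ioi_rpow_mul_min_one_ne_top {s : ℝ} (hs0 : 0 < s) (hs1 : s < 1) :
    ∫⁻ t in Set.Ioi 0, ENNReal.ofReal (t ^ (-s - 1) * min 1 t) ≠ ∞ := by
  have hlow : IntegrableOn (fun t : ℝ => t ^ (-s)) (Set.Ioc 0 1) :=
    (intervalIntegrable_iff_integrableOn_Ioc_of_le zero_le_one).mp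
      (intervalIntegral.intervalIntegrable_rpow' (by linarith))
  have hhigh : IntegrableOn (fun t : ℝ => t ^ (-s - 1)) (Set.Ioi 1) :=
    integrableOn_Ioi_rpow_of_lt (by linarith) one_pos
  rw [← Set.Ioc_union_Ioi_eq_Ioi zero_le_one]
  refine (lintegral_union_le _ _ _).trans_lt (ENNReal.add_lt_top.mpr ⟨?_, ?_⟩) |>.ne
  · refine (setLIntegral_mono' measurableSet_Ioc fun t ht => ?_).trans_lt
      hlow.lintegral_lt_top
    refine ENNReal.ofReal_le_ofReal ?_
    rw [min_eq_right ht.2, ← Real.rpow_add_one ht.1.ne', sub_add_cancel]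
  · refine (setLIntegral_mono' measurableSet_Ioi fun t ht => ?_).trans_lt
      hhigh.lintegral_lt_top
    exact ENNReal.ofReal_le_ofReal <| mul_le_of_le_one_right
      (Real.rpow_nonneg (zero_le_one.trans (le_of_lt ht)) _) (min_le_left _ _)

theorem tsum_rpow_mul_le_of_tsum_min_mul_le {β : Type*} [Countable β] {w : β → ℝ}
    (hw : ∀ k, 0 < w k) {a b : β → ℝ≥0∞} {c : ℝ≥0∞}
    (hab : ∀ t > 0, ∑' k, ENNReal.ofReal (min 1 (t * w k)) * a k ≤
      c * ∑' k, ENNReal.ofReal (min 1 (t * w k)) * b k) {s : ℝ} (hs0 : 0 < s) (hs1 : s < 1) :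
    ∑' k, ENNReal.ofReal (w k ^ s) * a k ≤ c * ∑' k, ENNReal.ofReal (w k ^ s) * b k := by
  let J : ℝ≥0∞ := ∫⁻ t in Set.Ioi 0, ENNReal.ofReal (t ^ (-s - 1) * min 1 t)
  have hmix (a : β → ℝ≥0∞) : J * ∑' k, ENNReal.ofReal (w k ^ s) * a k =
      ∫⁻ t in Set.Ioi 0, ENNReal.ofReal (t ^ (-s - 1)) *
        ∑' k, ENNReal.ofReal (min 1 (t * w k)) * a k := by
    calc J * ∑' k, ENNReal.ofReal (w k ^ s) * a k
        = ∑' k, ∫⁻ t in Set.Ioi 0, ENNReal.ofReal (t ^ (-s - 1) * min 1 (t * w k)) * a k := by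
          rw [← ENNReal.tsum_mul_left]
          congr with k
          rw [lintegral_mul_const _ (by fun_prop), lintegral_Ioi_rpow_mul_min_one_mul (hw k),
            ← mul_assoc, mul_comm J]
      _ = ∫⁻ t in Set.Ioi 0, ∑' k, ENNReal.ofReal (t ^ (-s - 1) * min 1 (t * w k)) * a k :=
          (lintegral_tsum fun k => by fun_prop).symm
      _ = _ := by
          refine setLIntegral_congr_fun measurableSet_Ioi fun t (ht : 0 < t) => ?_
          simp only [ENNReal.ofReal_mul (Real.rpow_nonneg ht.le _), mul_assoc,
            ENNReal.tsum_mul_left]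
  have hJ0 : J ≠ 0 := lintegral_Ioi_rpow_mul_min_one_ne_zero s
  have hJ : J ≠ ∞ := lintegral_Ioi_rpow_mul_min_one_ne_top hs0 hs1
  rw [← ENNReal.mul_le_mul_iff_right hJ0 hJ, mul_left_comm, hmix, hmix,
    ← lintegral_const_mul _ (by fun_prop)]
  refine setLIntegral_mono' measurableSet_Ioi fun t ht => ?_
  rw [mul_left_comm c]
  gcongr
  exact hab t ht

end Interpolation

section InterpolationOnTorus

variable {ι : Type*} [Fintype ι]

theorem fourierEnergy_mono {w w' : (ι → ℤ) → ℝ} (hw : ∀ k, w k ≤ w' k) (f : (ι → ℝ) → ℂ) :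
    fourierEnergy w f ≤ fourierEnergy w' f :=
  ENNReal.tsum_le_tsum fun k => by gcongr; exact hw k

theorem fourierEnergy_const_mul {t : ℝ} (ht : 0 ≤ t) (w : (ι → ℤ) → ℝ) (f : (ι → ℝ) → ℂ) :
    fourierEnergy (fun k => t * w k) f = ENNReal.ofReal t * fourierEnergy w f := by
  simp only [fourierEnergy, ENNReal.ofReal_mul ht, mul_assoc, ENNReal.tsum_mul_left]

theorem enorm_add_sq_le {E : Type*} [SeminormedAddCommGroup E] (a b : E) :
    ‖a + b‖ₑ ^ 2 ≤ 2 * ‖a‖ₑ ^ 2 + 2 * ‖b‖ₑ ^ 2 := by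
  have hsq : ‖a + b‖₊ ^ 2 ≤ 2 * ‖a‖₊ ^ 2 + 2 * ‖b‖₊ ^ 2 :=
    (pow_le_pow_left₀ zero_le (nnnorm_add_le a b) 2).trans (add_sq_le.trans_eq (mul_add _ _ _))
  simp only [enorm_eq_nnnorm]
  exact_mod_cast hsq

theorem fourierEnergy_add_le (w : (ι → ℤ) → ℝ) {f g : (ι → ℝ) → ℂ} (hf : Continuous f)
    (hg : Continuous g) :
    fourierEnergy w (f + g) ≤ 2 * fourierEnergy w f + 2 * fourierEnergy w g := by
  simp only [fourierEnergy, ← ENNReal.tsum_mul_left]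
  rw [← ENNReal.tsum_add]
  refine ENNReal.tsum_le_tsum fun k => ?_
  rw [torusFourierCoeff_add hf hg, Pi.add_apply, mul_left_comm 2, mul_left_comm 2, ← mul_add]
  gcongr
  exact enorm_add_sq_le _ _

theorem fourierEnergy_fourierTruncation_add {S : Finset (ι → ℤ)}
    {w w' : (ι → ℤ) → ℝ} {f : (ι → ℝ) → ℂ} (hf : Continuous f) :
    fourierEnergy w (fourierTruncation S f) + fourierEnergy w' (f - fourierTruncation S f) =
      fourierEnergy (fun k => if k ∈ S then w k else w' k) f := by
  have hlow : Continuous (fourierTruncation S f) :=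
    (contDiff_fourierTruncation (n := 0) S f).continuous
  have hsplit (k : ι → ℤ) : torusFourierCoeff f k =
      torusFourierCoeff (fourierTruncation S f) k +
        torusFourierCoeff (f - fourierTruncation S f) k := by
    rw [← Pi.add_apply, ← torusFourierCoeff_add hlow (hf.sub hlow), add_sub_cancel]
  rw [fourierEnergy, fourierEnergy, ← ENNReal.tsum_add]
  refine tsum_congr fun k => ?_
  have hk := hsplit k
  rw [torusFourierCoeff_fourierTruncation] at hk ⊢
  by_cases hkS : k ∈ S
  · simp only [if_pos hkS] at hk ⊢
    simp [left_eq_add.mp hk]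
  · simp only [if_neg hkS, zero_add] at hk ⊢
    simp [hk]

variable {T : ((ι → ℝ) → ℂ) → (ι → ℝ) → ℂ} {c : ℝ≥0∞}

theorem fourierEnergy_min_one_mul_le
    (hTc : ∀ f, ContDiff ℝ 1 f → Continuous (T f))
    (hTadd : ∀ f g, ContDiff ℝ 1 f → ContDiff ℝ 1 g → T (f + g) = T f + T g)
    (hT₀ : ∀ f, ContDiff ℝ 1 f → IsIntPeriodic f → fourierEnergy 1 (T f) ≤ c * fourierEnergy 1 f)
    (hT₁ : ∀ f, ContDiff ℝ 2 f → IsIntPeriodic f →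
      fourierEnergy sobolevWeight (T f) ≤ c * fourierEnergy sobolevWeight f)
    {f : (ι → ℝ) → ℂ} (hf : ContDiff ℝ 1 f) (hfp : IsIntPeriodic f) {t : ℝ} (ht : 0 < t) :
    fourierEnergy (fun k => min 1 (t * sobolevWeight k)) (T f) ≤
      2 * c * fourierEnergy (fun k => min 1 (t * sobolevWeight k)) f := by
  have hfin := finite_sobolevWeight_le (ι := ι) t⁻¹
  let S := hfin.toFinset
  let low := fourierTruncation S f
  have hlow {n : WithTop ℕ∞} : ContDiff ℝ n low := contDiff_fourierTruncation S f
  have hlowp : IsIntPeriodic low := isIntPeriodic_fourierTruncation S f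
  have hhigh : ContDiff ℝ 1 (f - low) := hf.sub hlow
  have hhighp : IsIntPeriodic (f - low) := fun n => (hfp n).sub (hlowp n)
  have hcut : (fun k : ι → ℤ => min 1 (t * sobolevWeight k)) =
      fun k => if k ∈ S then t * sobolevWeight k else (1 : (ι → ℤ) → ℝ) k := by
    ext k
    have hmem : k ∈ S ↔ t * sobolevWeight k ≤ 1 := by
      rw [Set.Finite.mem_toFinset, Set.mem_ofPred_eq, ← one_div, le_div_iff₀' ht]
    simp only [hmem, min_comm (1 : ℝ), min_def, Pi.one_apply]
  calc fourierEnergy (fun k => min 1 (t * sobolevWeight k)) (T f)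
      = fourierEnergy (fun k => min 1 (t * sobolevWeight k)) (T low + T (f - low)) := by
        rw [← hTadd _ _ hlow hhigh, add_sub_cancel]
    _ ≤ 2 * fourierEnergy (fun k => min 1 (t * sobolevWeight k)) (T low) +
          2 * fourierEnergy (fun k => min 1 (t * sobolevWeight k)) (T (f - low)) :=
        fourierEnergy_add_le _ (hTc _ hlow) (hTc _ hhigh)
    _ ≤ 2 * fourierEnergy (fun k => t * sobolevWeight k) (T low) +
          2 * fourierEnergy 1 (T (f - low)) := by
        gcongr
        · exact fourierEnergy_mono (fun _ => min_le_right _ _) _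
        · exact fourierEnergy_mono (fun _ => min_le_left _ _) _
    _ ≤ 2 * (c * fourierEnergy (fun k => t * sobolevWeight k) low) +
          2 * (c * fourierEnergy 1 (f - low)) := by
        simp only [fourierEnergy_const_mul ht.le, mul_left_comm c]
        gcongr
        · exact hT₁ low hlow hlowp
        · exact hT₀ (f - low) hhigh hhighp
    _ = 2 * c * fourierEnergy (fun k => min 1 (t * sobolevWeight k)) f := by
        rw [← mul_assoc, ← mul_assoc, ← mul_add, fourierEnergy_fourierTruncation_add hf.continuous,
          hcut]

theorem fourierEnergy_sobolevWeight_rpow_le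
    (hTc : ∀ f, ContDiff ℝ 1 f → Continuous (T f))
    (hTadd : ∀ f g, ContDiff ℝ 1 f → ContDiff ℝ 1 g → T (f + g) = T f + T g)
    (hT₀ : ∀ f, ContDiff ℝ 1 f → IsIntPeriodic f → fourierEnergy 1 (T f) ≤ c * fourierEnergy 1 f)
    (hT₁ : ∀ f, ContDiff ℝ 2 f → IsIntPeriodic f →
      fourierEnergy sobolevWeight (T f) ≤ c * fourierEnergy sobolevWeight f)
    {f : (ι → ℝ) → ℂ} (hf : ContDiff ℝ 2 f) (hfp : IsIntPeriodic f) {s : ℝ} (hs0 : 0 ≤ s)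
    (hs1 : s ≤ 1) :
    fourierEnergy (fun k => sobolevWeight k ^ s) (T f) ≤
      2 * c * fourierEnergy (fun k => sobolevWeight k ^ s) f := by
  have hf₁ : ContDiff ℝ 1 f := hf.of_le one_le_two
  have hdouble {x y : ℝ≥0∞} (h : x ≤ c * y) : x ≤ 2 * c * y :=
    h.trans (by rw [mul_assoc]; exact le_mul_of_one_le_left' one_le_two)
  rcases hs0.eq_or_lt with rfl | hs0
  · simp only [Real.rpow_zero]
    exact hdouble (hT₀ f hf₁ hfp)
  rcases hs1.eq_or_lt with rfl | hs1
  · simpa only [Real.rpow_one] using hdouble (hT₁ f hf hfp)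
  exact tsum_rpow_mul_le_of_tsum_min_mul_le
    (fun k => zero_lt_one.trans_le (one_le_sobolevWeight k))
    (fun t ht => fourierEnergy_min_one_mul_le hTc hTadd hT₀ hT₁ hf₁ hfp ht) hs0 hs1

end InterpolationOnTorus

section CommutatorOnTorus

variable {ι : Type*} [Fintype ι] {η h : (ι → ℝ) → ℝ} {f : (ι → ℝ) → ℂ} {L : ℝ≥0}

theorem isIntPeriodic_convCommutator {u : (ι → ℝ) → ℂ} (hhp : IsIntPeriodic h)
    (hup : IsIntPeriodic u) : IsIntPeriodic (convCommutator volume η h u) :=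
  fun n => periodic_convCommutator (hhp n) (hup n)

theorem fourierEnergy_one_convCommutator_le {M : ℝ≥0∞} {u : (ι → ℝ) → ℂ} (hη : Continuous η)
    (hηc : HasCompactSupport η) (hh : Continuous h) (hhp : IsIntPeriodic h)
    (hM : ∀ x, ‖h x‖ₑ ≤ M) (hu : Continuous u) (hup : IsIntPeriodic u) :
    fourierEnergy 1 (convCommutator volume η h u) ≤
      (2 * M * ∫⁻ y, ‖η y‖ₑ) ^ 2 * fourierEnergy 1 u := by
  have hmeas : Measurable fun y => ‖η y‖ₑ := hη.measurable.enorm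
  rw [fourierEnergy_one (continuous_convCommutator hη hηc hh hu)
      (isIntPeriodic_convCommutator hhp hup),
    fourierEnergy_one hu hup, ← lintegral_const_mul _ hmeas]
  exact lintegral_unitCube_sq_le_of_le_convolution (hmeas.const_mul _) hu.measurable.enorm
    (hup.comp_left _) (enorm_convCommutator_le hη hηc hh hM hu)

theorem fourierEnergy_one_convCommutator_dirDeriv_le (hη : ContDiff ℝ 1 η)
    (hηc : HasCompactSupport η) (hh : ContDiff ℝ 1 h) (hhp : IsIntPeriodic h)
    (hL : LipschitzWith L h) (hf : ContDiff ℝ 1 f) (hfp : IsIntPeriodic f) (v : ι → ℝ) :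
    fourierEnergy 1 (convCommutator volume η h (dirDeriv v f)) ≤
      (L * ∫⁻ y, commutatorKernel v η y) ^ 2 * fourierEnergy 1 f := by
  have hdf := continuous_dirDeriv hf v
  have hmeas := measurable_commutatorKernel hη v
  rw [fourierEnergy_one (continuous_convCommutator hη.continuous hηc hh.continuous hdf)
      (isIntPeriodic_convCommutator hhp (isIntPeriodic_dirDeriv hfp v)),
    fourierEnergy_one hf.continuous hfp, ← lintegral_const_mul _ hmeas]
  exact lintegral_unitCube_sq_le_of_le_convolution (hmeas.const_mul _)
    hf.continuous.measurable.enorm (hfp.comp_left _)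
    (enorm_convCommutator_dirDeriv_le hη hηc hh hL hf v)

theorem enorm_single_one [DecidableEq ι] (i : ι) : ‖(Pi.single i 1 : ι → ℝ)‖ₑ = 1 := by
  simp [enorm_eq_nnnorm, Pi.nnnorm_single]

theorem lintegral_enorm_le_lintegral_commutatorKernel [DecidableEq ι] (α : ι) :
    ∫⁻ y, ‖η y‖ₑ ≤ ∫⁻ y, commutatorKernel (Pi.single α 1) η y := by
  refine lintegral_mono fun y => le_add_of_nonneg_of_le zero_le ?_
  rw [enorm_single_one, one_mul]

theorem fourierEnergy_one_dirDeriv_convCommutator_le [DecidableEq ι] (hη : ContDiff ℝ 1 η)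
    (hηc : HasCompactSupport η) (hh : ContDiff ℝ 1 h) (hhp : IsIntPeriodic h)
    (hL : LipschitzWith L h) (hf : ContDiff ℝ 2 f) (hfp : IsIntPeriodic f) (α j : ι) :
    fourierEnergy 1
        (dirDeriv (Pi.single j 1) (convCommutator volume η h (dirDeriv (Pi.single α 1) f))) ≤
      (L * ∫⁻ y, commutatorKernel (Pi.single α 1) η y) ^ 2 *
        (8 * fourierEnergy 1 (dirDeriv (Pi.single α 1) f) +
          2 * fourierEnergy 1 (dirDeriv (Pi.single j 1) f)) := by
  set K := ∫⁻ y, commutatorKernel (Pi.single α 1) η y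
  have hdf (i : ι) : ContDiff ℝ 1 (dirDeriv (Pi.single i 1) f) := contDiff_dirDeriv (n := 1) hf _
  have hdfp (i : ι) : IsIntPeriodic (dirDeriv (Pi.single i 1) f) := isIntPeriodic_dirDeriv hfp _
  have hdh := continuous_dirDeriv hh (Pi.single j 1)
  have hdhM (x : ι → ℝ) : ‖dirDeriv (Pi.single j 1) h x‖ₑ ≤ L := by
    simpa [enorm_single_one] using enorm_dirDeriv_le hL (Pi.single j 1) x
  rw [dirDeriv_convCommutator hη hηc hh (hdf α), dirDeriv_comm hf]
  calc fourierEnergy 1 (convCommutator volume η (dirDeriv (Pi.single j 1) h)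
          (dirDeriv (Pi.single α 1) f) +
        convCommutator volume η h (dirDeriv (Pi.single α 1) (dirDeriv (Pi.single j 1) f)))
      ≤ 2 * fourierEnergy 1 (convCommutator volume η (dirDeriv (Pi.single j 1) h)
          (dirDeriv (Pi.single α 1) f)) +
        2 * fourierEnergy 1 (convCommutator volume η h
          (dirDeriv (Pi.single α 1) (dirDeriv (Pi.single j 1) f))) :=
        fourierEnergy_add_le _
          (continuous_convCommutator hη.continuous hηc hdh (hdf α).continuous)
          (continuous_convCommutator hη.continuous hηc hh.continuous
            (continuous_dirDeriv (hdf j) _))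
    _ ≤ 2 * ((2 * L * K) ^ 2 * fourierEnergy 1 (dirDeriv (Pi.single α 1) f)) +
        2 * ((L * K) ^ 2 * fourierEnergy 1 (dirDeriv (Pi.single j 1) f)) := by
        gcongr
        · refine (fourierEnergy_one_convCommutator_le hη.continuous hηc hdh
            (isIntPeriodic_dirDeriv hhp _) hdhM (hdf α).continuous (hdfp α)).trans ?_
          gcongr
          exact lintegral_enorm_le_lintegral_commutatorKernel α
        · exact fourierEnergy_one_convCommutator_dirDeriv_le hη hηc hh hhp hL (hdf j) (hdfp j) _
    _ = _ := by ring

theorem fourierEnergy_sobolevWeight_convCommutator_dirDeriv_le [DecidableEq ι]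
    (hη : ContDiff ℝ 1 η) (hηc : HasCompactSupport η) (hh : ContDiff ℝ 1 h)
    (hhp : IsIntPeriodic h) (hL : LipschitzWith L h) (hf : ContDiff ℝ 2 f)
    (hfp : IsIntPeriodic f) (α : ι) :
    fourierEnergy sobolevWeight (convCommutator volume η h (dirDeriv (Pi.single α 1) f)) ≤
      (8 * Fintype.card ι + 2) * (L * ∫⁻ y, commutatorKernel (Pi.single α 1) η y) ^ 2 *
        fourierEnergy sobolevWeight f := by
  set A := (L * ∫⁻ y, commutatorKernel (Pi.single α 1) η y) ^ 2
  set q := ENNReal.ofReal (4 * Real.pi ^ 2)⁻¹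
  let D (j : ι) : ℝ≥0∞ := fourierEnergy 1 (dirDeriv (Pi.single j 1) f)
  have hf₁ : ContDiff ℝ 1 f := hf.of_le one_le_two
  have hcomm := contDiff_convCommutator (μ := volume) hη hηc hh
    (continuous_dirDeriv hf₁ (Pi.single α 1))
  have hcommp := isIntPeriodic_convCommutator (η := η) hhp
    (isIntPeriodic_dirDeriv hfp (Pi.single α 1))
  have hDα : D α ≤ ∑ j, D j := Finset.single_le_sum (fun _ _ => zero_le) (Finset.mem_univ α)
  rw [fourierEnergy_sobolevWeight hcomm hcommp, fourierEnergy_sobolevWeight hf₁ hfp]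
  calc _ ≤ A * fourierEnergy 1 f + q * ∑ j, A * (8 * D α + 2 * D j) := by
        gcongr with j
        · exact fourierEnergy_one_convCommutator_dirDeriv_le hη hηc hh hhp hL hf₁ hfp _
        · exact fourierEnergy_one_dirDeriv_convCommutator_le hη hηc hh hhp hL hf hfp α j
    _ = A * fourierEnergy 1 f + q * (A * (8 * Fintype.card ι * D α + 2 * ∑ j, D j)) := by
        simp only [← Finset.mul_sum, Finset.sum_add_distrib, Finset.sum_const, Finset.card_univ,
          nsmul_eq_mul, mul_assoc]
    _ ≤ (8 * Fintype.card ι + 2) * A * fourierEnergy 1 f +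
        q * (A * (8 * Fintype.card ι * ∑ j, D j + 2 * ∑ j, D j)) := by
        gcongr
        exact le_mul_of_one_le_left' (one_le_two.trans le_add_self)
    _ = _ := by ring

theorem fourierEnergy_rpow_convCommutator_dirDeriv_le [DecidableEq ι]
    (hη : ContDiff ℝ 1 η) (hηc : HasCompactSupport η) (hh : ContDiff ℝ 1 h)
    (hhp : IsIntPeriodic h) (hL : LipschitzWith L h) (hf : ContDiff ℝ 2 f)
    (hfp : IsIntPeriodic f) (α : ι) {s : ℝ} (hs0 : 0 ≤ s) (hs1 : s ≤ 1) :
    fourierEnergy (fun k => sobolevWeight k ^ s)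
        (convCommutator volume η h (dirDeriv (Pi.single α 1) f)) ≤
      2 * ((8 * Fintype.card ι + 2) * (L * ∫⁻ y, commutatorKernel (Pi.single α 1) η y) ^ 2) *
        fourierEnergy (fun k => sobolevWeight k ^ s) f := by
  refine fourierEnergy_sobolevWeight_rpow_le
    (T := fun f => convCommutator volume η h (dirDeriv (Pi.single α 1) f))
    (fun f hf => continuous_convCommutator hη.continuous hηc hh.continuous
      (continuous_dirDeriv hf _))
    (fun f g hf hg => ?_) (fun f hf hfp => ?_)
    (fun f hf hfp => fourierEnergy_sobolevWeight_convCommutator_dirDeriv_le hη hηc hh hhp hL hf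
      hfp α) hf hfp hs0 hs1
  · simp only [dirDeriv_add (hf.differentiable one_ne_zero) (hg.differentiable one_ne_zero)]
    exact convCommutator_add hη.continuous hηc hh.continuous (continuous_dirDeriv hf _)
      (continuous_dirDeriv hg _)
  · refine (fourierEnergy_one_convCommutator_dirDeriv_le hη hηc hh hhp hL hf hfp _).trans ?_
    gcongr
    exact le_mul_of_one_le_left' (one_le_two.trans le_add_self)

end CommutatorOnTorus

section FiniteEnergy

variable {ι : Type*} [Fintype ι]

theorem fourierEnergy_one_ne_top {f : (ι → ℝ) → ℂ} (hf : Continuous f) (hfp : IsIntPeriodic f) :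
    fourierEnergy 1 f ≠ ∞ := by
  have hint : IntegrableOn (fun x => ‖f x‖ ^ 2) (unitCube ι) :=
    integrableOn_unitCube (hf.norm.pow 2)
  rw [fourierEnergy_one hf hfp]
  simpa [HasFiniteIntegral] using hint.hasFiniteIntegral.ne

theorem fourierEnergy_sobolevWeight_ne_top {f : (ι → ℝ) → ℂ} (hf : ContDiff ℝ 1 f)
    (hfp : IsIntPeriodic f) : fourierEnergy sobolevWeight f ≠ ∞ := by
  classical
  rw [fourierEnergy_sobolevWeight hf hfp]
  refine ENNReal.add_ne_top.mpr ⟨fourierEnergy_one_ne_top hf.continuous hfp,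
    ENNReal.mul_ne_top ENNReal.ofReal_ne_top (ENNReal.sum_ne_top.mpr fun i _ => ?_)⟩
  exact fourierEnergy_one_ne_top (continuous_dirDeriv hf _) (isIntPeriodic_dirDeriv hfp _)

theorem fourierEnergy_sobolevWeight_rpow_ne_top {f : (ι → ℝ) → ℂ} (hf : ContDiff ℝ 1 f)
    (hfp : IsIntPeriodic f) {s : ℝ} (hs : s ≤ 1) :
    fourierEnergy (fun k => sobolevWeight k ^ s) f ≠ ∞ := by
  refine ne_top_of_le_ne_top (fourierEnergy_sobolevWeight_ne_top hf hfp)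
    (fourierEnergy_mono (fun k => ?_) f)
  simpa using Real.rpow_le_rpow_of_exponent_le (one_le_sobolevWeight k) hs

end FiniteEnergy

section RealFunctions

theorem lipschitzWith_of_nnnorm_dirDeriv_single_le {ι : Type*} [Fintype ι] [DecidableEq ι]
    {h : (ι → ℝ) → ℝ} {M : ℝ≥0} (hh : Differentiable ℝ h)
    (hM : ∀ x i, ‖dirDeriv (Pi.single i 1) h x‖₊ ≤ M) : LipschitzWith (Fintype.card ι * M) h := by
  refine lipschitzWith_of_nnnorm_fderiv_le hh fun x =>
    ContinuousLinearMap.opNNNorm_le_bound _ _ fun v => ?_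
  calc ‖fderiv ℝ h x v‖₊
      = ‖∑ i, v i • dirDeriv (Pi.single i 1) h x‖₊ := by
        conv_lhs => rw [← Finset.univ_sum_single v, map_sum]
        congr with i
        rw [dirDeriv, ← map_smul, ← Pi.single_smul, smul_eq_mul, mul_one]
    _ ≤ ∑ i, ‖v i • dirDeriv (Pi.single i 1) h x‖₊ := nnnorm_sum_le _ _
    _ ≤ ∑ _i : ι, ‖v‖₊ * M := by
        refine Finset.sum_le_sum fun i _ => ?_
        rw [nnnorm_smul]
        exact mul_le_mul' (nnnorm_le_pi_nnnorm v i) (hM x i)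
    _ = Fintype.card ι * M * ‖v‖₊ := by
        rw [Finset.sum_const, Finset.card_univ, nsmul_eq_mul]
        ring

theorem dirDeriv_ofReal {V : Type*} [NormedAddCommGroup V] [NormedSpace ℝ V]
    {g : V → ℝ} (hg : Differentiable ℝ g) (v : V) :
    dirDeriv v (fun x => (g x : ℂ)) = fun x => ((dirDeriv v g x : ℝ) : ℂ) := by
  ext x
  have hcomp : HasFDerivAt (fun x => (g x : ℂ)) _ x :=
    Complex.ofRealCLM.hasFDerivAt.comp x (hg x).hasFDerivAt
  rw [dirDeriv, hcomp.fderiv]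
  rfl

theorem convCommutator_ofReal {V : Type*} [NormedAddCommGroup V] [MeasurableSpace V]
    (μ : Measure V) (η h u : V → ℝ) :
    convCommutator μ η h (fun x => (u x : ℂ)) =
      fun x => ((convCommutator μ η h u x : ℝ) : ℂ) := by
  ext x
  simp only [convCommutator, convolution_def, Pi.sub_apply, Pi.smul_apply',
    ContinuousLinearMap.lsmul_apply, smul_eq_mul, Complex.real_smul, Complex.ofReal_sub,
    Complex.ofReal_mul, ← integral_complex_ofReal, Pi.mul_apply]

theorem fCoeff_eq_torusFourierCoeff (f : (Fin 2 → ℝ) → ℝ) (k : Fin 2 → ℤ) :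
    fCoeff f k = torusFourierCoeff (fun x => (f x : ℂ)) k := by
  refine setIntegral_congr_fun measurableSet_unitCube fun x _ => ?_
  have hphase : -((2 * Real.pi * ∑ i, (k i : ℝ) * x i : ℝ) : ℂ) =
      ((2 * Real.pi * ∑ i, ((-k) i : ℝ) * x i : ℝ) : ℂ) := by
    simp only [Pi.neg_apply, Int.cast_neg, neg_mul, Finset.sum_neg_distrib, mul_neg,
      Complex.ofReal_neg]
  rw [hphase, mul_comm]
  rfl

theorem hsNormSq_eq_toReal_fourierEnergy (s : ℝ) (f : (Fin 2 → ℝ) → ℝ) :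
    hsNormSq s f = (fourierEnergy (fun k => sobolevWeight k ^ s) fun x => (f x : ℂ)).toReal := by
  rw [fourierEnergy, ENNReal.tsum_toReal_eq fun k => ENNReal.mul_ne_top ENNReal.ofReal_ne_top
    (ENNReal.pow_ne_top enorm_ne_top)]
  refine tsum_congr fun k => ?_
  have hw : 0 ≤ sobolevWeight k ^ s :=
    Real.rpow_nonneg (zero_le_one.trans (one_le_sobolevWeight k)) s
  simp only [ENNReal.toReal_mul, ENNReal.toReal_ofReal hw, ENNReal.toReal_pow, toReal_enorm,
    fCoeff_eq_torusFourierCoeff]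
  rfl

theorem moll_eq_convolution (ρ : (Fin 2 → ℝ) → ℝ) (κ : ℝ) (f : (Fin 2 → ℝ) → ℝ) :
    moll ρ κ f = rescaledKernel ρ κ ⋆[lsmul ℝ ℝ, volume] f := by
  ext x
  simp [moll, convolution_def, rescaledKernel]

theorem ofReal_moll_commutator {g : (Fin 2 → ℝ) → ℝ} (hg : Differentiable ℝ g)
    (ρ h : (Fin 2 → ℝ) → ℝ) (κ : ℝ) (α : Fin 2) :
    (fun x => ((moll ρ κ (fun y => h y * pd2 α g y) x - h x * moll ρ κ (pd2 α g) x : ℝ) : ℂ)) =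
      convCommutator volume (rescaledKernel ρ κ) h
        (dirDeriv (Pi.single α 1) fun x => (g x : ℂ)) := by
  rw [dirDeriv_ofReal hg, convCommutator_ofReal]
  simp only [moll_eq_convolution]
  rfl

end RealFunctions

theorem sqrt_toReal_le_of_le_sq_mul {a b c : ℝ≥0∞} (hc : c ≠ ∞) (hb : b ≠ ∞)
    (h : a ≤ c ^ 2 * b) : √a.toReal ≤ c.toReal * √b.toReal :=
  calc √a.toReal ≤ √(c ^ 2 * b).toReal :=
        Real.sqrt_le_sqrt (ENNReal.toReal_mono (ENNReal.mul_ne_top (ENNReal.pow_ne_top hc) hb) h)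
    _ = c.toReal * √b.toReal := by
        rw [ENNReal.toReal_mul, ENNReal.toReal_pow, Real.sqrt_mul (sq_nonneg _),
          Real.sqrt_sq ENNReal.toReal_nonneg]

theorem stmt16_general (ρ : (Fin 2 → ℝ) → ℝ) (hρ : ContDiff ℝ 1 ρ) (hρc : HasCompactSupport ρ)
    (α : Fin 2) :
    ∃ C > 0, ∀ s : ℝ, 0 ≤ s → s ≤ 1 → ∀ κ : ℝ, 0 < κ → ∀ h g : (Fin 2 → ℝ) → ℝ,
      ContDiff ℝ 1 h → ContDiff ℝ 2 g →
      (∀ (x : Fin 2 → ℝ) (k : Fin 2), h (x + Pi.single k 1) = h x) →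
      (∀ (x : Fin 2 → ℝ) (k : Fin 2), g (x + Pi.single k 1) = g x) →
      ∀ M : ℝ, (∀ x i, |pd2 i h x| ≤ M) →
      Real.sqrt (hsNormSq s
          (fun x => moll ρ κ (fun y => h y * pd2 α g y) x - h x * moll ρ κ (pd2 α g) x))
        ≤ C * M * Real.sqrt (hsNormSq s g) := by
  let K : ℝ≥0∞ := ∫⁻ y, commutatorKernel (Pi.single α 1) ρ y
  have hK : K ≠ ∞ := lintegral_commutatorKernel_ne_top hρ hρc _
  refine ⟨12 * K.toReal + 1, by positivity, fun s hs0 hs1 κ hκ h g hh hg hhp hgp M hM => ?_⟩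
  lift M to ℝ≥0 using (abs_nonneg _).trans (hM 0 0)
  let G : (Fin 2 → ℝ) → ℂ := fun x => (g x : ℂ)
  have hG : ContDiff ℝ 2 G := Complex.ofRealCLM.contDiff.comp hg
  have hGp : IsIntPeriodic G := (isIntPeriodic_of_single hgp).comp_left _
  have hL : LipschitzWith (2 * M) h := by
    simpa using lipschitzWith_of_nnnorm_dirDeriv_single_le (hh.differentiable one_ne_zero) hM
  have henergy := fourierEnergy_rpow_convCommutator_dirDeriv_le (contDiff_rescaledKernel hρ κ)
    (hasCompactSupport_rescaledKernel hρc hκ.ne') hh (isIntPeriodic_of_single hhp) hL hG hGp α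
    hs0 hs1
  rw [lintegral_commutatorKernel_rescaledKernel (hρ.differentiable one_ne_zero) hκ] at henergy
  rw [hsNormSq_eq_toReal_fourierEnergy, hsNormSq_eq_toReal_fourierEnergy,
    ofReal_moll_commutator (hg.differentiable two_ne_zero)]
  have hfin := fourierEnergy_sobolevWeight_rpow_ne_top (hG.of_le one_le_two) hGp hs1
  have hconst : 2 * ((8 * Fintype.card (Fin 2) + 2) * ((2 * M : ℝ≥0) * K) ^ 2) =
      (12 * K * M) ^ 2 := by
    rw [Fintype.card_fin]
    push_cast
    ring
  have hc : 12 * K * M ≠ ∞ := by finiteness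
  refine (sqrt_toReal_le_of_le_sq_mul hc hfin (hconst ▸ henergy)).trans ?_
  simp only [ENNReal.toReal_mul, ENNReal.toReal_ofNat, ENNReal.coe_toReal]
  gcongr
  exact le_add_of_nonneg_right zero_le_one

/-- Commutator estimate for mollifiers:
`|[Λ_κ, h] ∂̄ g|_{H^s} ≤ C ‖h‖_{C¹} |g|_{H^s}` for `0 ≤ s ≤ 1`, uniformly in `κ`. -/
theorem stmt16 (ρ : (Fin 2 → ℝ) → ℝ) (hρsm : ContDiff ℝ (⊤ : ℕ∞) ρ)
    (hρsupp : HasCompactSupport ρ) (hρ0 : ∀ x, 0 ≤ ρ x) (hρ1 : (∫ x, ρ x) = 1)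
    (s : ℝ) (hs0 : 0 ≤ s) (hs1 : s ≤ 1) (α : Fin 2) :
    ∃ C > 0, ∀ κ : ℝ, 0 < κ → ∀ h g : (Fin 2 → ℝ) → ℝ,
      ContDiff ℝ 1 h → ContDiff ℝ (⊤ : ℕ∞) g →
      (∀ (x : Fin 2 → ℝ) (k : Fin 2), h (x + Pi.single k 1) = h x) →
      (∀ (x : Fin 2 → ℝ) (k : Fin 2), g (x + Pi.single k 1) = g x) →
      ∀ Mh : ℝ, (∀ x, |h x| ≤ Mh) → (∀ x i, |pd2 i h x| ≤ Mh) →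
      Real.sqrt (hsNormSq s
          (fun x => moll ρ κ (fun y => h y * pd2 α g y) x - h x * moll ρ κ (pd2 α g) x))
        ≤ C * Mh * Real.sqrt (hsNormSq s g) := by
  obtain ⟨C, hC, hbound⟩ := stmt16_general ρ (contDiff_infty.mp hρsm 1) hρsupp α
  exact ⟨C, hC, fun κ hκ h g hh hg hhp hgp Mh _ hM =>
    hbound s hs0 hs1 κ hκ h g hh (contDiff_infty.mp hg 2) hhp hgp Mh hM⟩
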